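/- arXiv:math/0411140 — 2 statements merged into one kernel-verified Lean document; each statement's English description precedes it below -/
import Mathlib

section
/- The multiplicative semigroup of positive rationals generated by 2 together with the fractions (2k+1)/(3k+2) for all integers k ≥ 0 equals the set of all positive rationals a/b in lowest terms with b not divisible by 3. -/
/-- The generating set of the 3x+1 semigroup: 2 together with (2k+1)/(3k+2) for k ≥ 0. -/
def collatzGens : Set ℚ := {2} ∪ {q : ℚ | ∃ k : ℕ, q = (2 * k + 1) / (3 * k + 2)}

/-- The 3x+1 semigroup `S`. -/
def collatzSemigroup : Subsemigroup ℚ := Subsemigroup.closure collatzGens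

/-- `MemS n` says that the natural number `n` lies in the semigroup. -/
def MemS (n : ℕ) : Prop := (n : ℚ) ∈ collatzSemigroup

/-- `MemInv n` says that the unit fraction `1 / n` lies in the semigroup. -/
def MemInv (n : ℕ) : Prop := (n : ℚ)⁻¹ ∈ collatzSemigroup

lemma two_mem : (2 : ℚ) ∈ collatzSemigroup :=
  Subsemigroup.subset_closure (Or.inl rfl)

lemma div_mem_of_step {y t : ℕ} (h : 2 * t = 3 * y + 1) :
    (y : ℚ) / t ∈ collatzSemigroup := by
  obtain ⟨k, rfl⟩ : ∃ k, y = 2 * k + 1 := ⟨y / 2, by omega⟩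
  obtain rfl : t = 3 * k + 2 := by omega
  exact Subsemigroup.subset_closure (Or.inr ⟨k, by push_cast; rfl⟩)

lemma memInv_two : MemInv 2 := by
  have h := div_mem_of_step (y := 1) (t := 2) (by norm_num)
  simpa [MemInv] using h

lemma MemS.mul {a b : ℕ} (ha : MemS a) (hb : MemS b) : MemS (a * b) := by
  simpa [MemS] using mul_mem ha hb

lemma MemInv.mul {a b : ℕ} (ha : MemInv a) (hb : MemInv b) : MemInv (a * b) := by
  simpa [MemInv, mul_comm] using mul_mem ha hb

lemma memS_one : MemS 1 := by
  have h := mul_mem two_mem memInv_two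
  simpa [MemS] using h

lemma memInv_one : MemInv 1 := by
  simpa [MemInv, MemS] using memS_one

lemma MemS.two_mul {n : ℕ} (h : MemS n) : MemS (2 * n) :=
  MemS.mul (by simpa [MemS] using two_mem) h

lemma MemS.two_pow_mul {n : ℕ} (h : MemS n) : ∀ k : ℕ, MemS (2 ^ k * n)
  | 0 => by simpa using h
  | k + 1 => by
    have := (MemS.two_pow_mul h k).two_mul
    rwa [pow_succ', mul_assoc]

lemma MemS.of_step {y t : ℕ} (h : 2 * t = 3 * y + 1) (ht : MemS t) : MemS y := by
  have h0 : (t : ℚ) ≠ 0 := by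
    have : t ≠ 0 := by omega
    exact_mod_cast this
  have := mul_mem (div_mem_of_step h) ht
  rwa [div_mul_cancel₀ _ h0] at this

lemma MemS.of_mul {q n : ℕ} (hq0 : q ≠ 0) (hq : MemInv q) (h : MemS (q * n)) : MemS n := by
  have h0 : (q : ℚ) ≠ 0 := by exact_mod_cast hq0
  have := mul_mem hq h
  rwa [Nat.cast_mul, inv_mul_cancel_left₀ h0] at this

lemma MemInv.of_step {y p q : ℕ} (h : 2 * (p * q) = 3 * y + 1) (hy : MemInv y) (hq : MemS q) :
    MemInv p := by
  have hy0 : (y : ℚ) ≠ 0 := by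
    have : y ≠ 0 := by rintro rfl; omega
    exact_mod_cast this
  have hq0 : (q : ℚ) ≠ 0 := by
    have : q ≠ 0 := by rintro rfl; omega
    exact_mod_cast this
  have := mul_mem (mul_mem hy (div_mem_of_step h)) hq
  have e : (y : ℚ)⁻¹ * (y / ((p * q : ℕ) : ℚ)) * q = (p : ℚ)⁻¹ := by
    push_cast
    by_cases hp : (p : ℚ) = 0
    · simp [hp]
    · field_simp
  rwa [e] at this

lemma MemInv.of_prime_factors {n : ℕ} (hn : n ≠ 0)
    (h : ∀ r : ℕ, r.Prime → r ∣ n → MemInv r) : MemInv n := by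
  induction n using Nat.recOnMul with
  | zero => exact absurd rfl hn
  | one => exact memInv_one
  | prime p hp => exact h p hp dvd_rfl
  | mul a b iha ihb =>
    rw [mul_ne_zero_iff] at hn
    exact (iha hn.1 fun r hr hd => h r hr (hd.mul_right b)).mul
      (ihb hn.2 fun r hr hd => h r hr (hd.mul_left a))

/-- Whether the `3x+1` trajectory of `n` reaches `1` within the given number of steps. -/
def reachesOne : ℕ → ℕ → Bool
  | 0, n => n == 1
  | s + 1, n => n == 1 ||
      if n % 2 = 0 then reachesOne s (n / 2) else reachesOne s ((3 * n + 1) / 2)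

lemma memS_of_reachesOne : ∀ {s n : ℕ}, reachesOne s n = true → MemS n
  | 0, n, h => by
    obtain rfl : n = 1 := by simpa [reachesOne] using h
    exact memS_one
  | s + 1, n, h => by
    rw [reachesOne, Bool.or_eq_true] at h
    rcases h with h | h
    · obtain rfl : n = 1 := by simpa using h
      exact memS_one
    · split_ifs at h with h2
      · have := (memS_of_reachesOne h).two_mul
        rwa [Nat.mul_div_cancel' (Nat.dvd_of_mod_eq_zero h2)] at this
      · exact (memS_of_reachesOne h).of_step (by omega)

lemma memInv_five : MemInv 5 := by
  have h7 := div_mem_of_step (y := 7) (t := 11) (by norm_num)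
  have h11 := div_mem_of_step (y := 11) (t := 17) (by norm_num)
  have h17 := div_mem_of_step (y := 17) (t := 26) (by norm_num)
  have h65 := div_mem_of_step (y := 65) (t := 98) (by norm_num)
  have h833 := div_mem_of_step (y := 833) (t := 1250) (by norm_num)
  have ha := mul_mem h7 h11
  have hb := mul_mem h17 h65
  have h := mul_mem (mul_mem (mul_mem h833 (mul_mem hb (mul_mem hb hb)))
    (mul_mem (mul_mem ha ha) (mul_mem ha ha))) (memS_one.two_pow_mul 7)
  rw [MemInv]
  convert h using 1
  norm_num

lemma memInv_of_prime_lt {p : ℕ} (hp : p.Prime) (h3 : p ≠ 3) (hlt : p < 64) : MemInv p := by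
  have S : ∀ q ∈ [1, 2, 5, 7, 14, 16, 134], MemS q := by
    intro q hq
    have : ∀ q ∈ [1, 2, 5, 7, 14, 16, 134], reachesOne 30 q = true := by decide
    exact memS_of_reachesOne (this q hq)
  have h5 := memInv_five
  have h7 : MemInv 7 :=
    .of_step (y := 5 * 5 * (5 * 5)) (q := 134) (by norm_num) ((h5.mul h5).mul (h5.mul h5))
      (S _ (by simp))
  have h11 : MemInv 11 := .of_step (y := 7) (q := 1) (by norm_num) h7 (S _ (by simp))
  have h13 : MemInv 13 :=
    .of_step (y := 11 * 11) (q := 14) (by norm_num) (h11.mul h11) (S _ (by simp))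
  have h17 : MemInv 17 := .of_step (y := 11) (q := 1) (by norm_num) h11 (S _ (by simp))
  have h19 : MemInv 19 := .of_step (y := 5 * 5) (q := 2) (by norm_num) (h5.mul h5) (S _ (by simp))
  have h23 : MemInv 23 :=
    .of_step (y := 5 * (7 * 7)) (q := 16) (by norm_num) (h5.mul (h7.mul h7)) (S _ (by simp))
  have h29 : MemInv 29 := .of_step (y := 19) (q := 1) (by norm_num) h19 (S _ (by simp))
  have h31 : MemInv 31 :=
    .of_step (y := 17 * 17) (q := 14) (by norm_num) (h17.mul h17) (S _ (by simp))
  have h37 : MemInv 37 := .of_step (y := 7 * 7) (q := 2) (by norm_num) (h7.mul h7) (S _ (by simp))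
  have h41 : MemInv 41 :=
    .of_step (y := 19 * 23) (q := 16) (by norm_num) (h19.mul h23) (S _ (by simp))
  have h43 : MemInv 43 :=
    .of_step (y := 11 * 13) (q := 5) (by norm_num) (h11.mul h13) (S _ (by simp))
  have h47 : MemInv 47 := .of_step (y := 31) (q := 1) (by norm_num) h31 (S _ (by simp))
  have h53 : MemInv 53 := .of_step (y := 5 * 7) (q := 1) (by norm_num) (h5.mul h7) (S _ (by simp))
  have h59 : MemInv 59 :=
    .of_step (y := 5 * 5 * 11) (q := 7) (by norm_num) ((h5.mul h5).mul h11) (S _ (by simp))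
  have h61 : MemInv 61 :=
    .of_step (y := 7 * 29) (q := 5) (by norm_num) (h7.mul h29) (S _ (by simp))
  have h2 := memInv_two
  interval_cases p <;> first | assumption | exact absurd rfl h3 | exact absurd hp (by norm_num)

/-- Whether `s` steps of the `3x+1` map can be performed on `a * r + b` with all parities
independent of `r`, arriving at a value that is at most `47 / 50` of `A * r + B`. -/
def descends (A B : ℕ) : ℕ → ℕ → ℕ → Bool
  | 0, a, b => decide (50 * a ≤ 47 * A) && decide (50 * b ≤ 47 * B) && decide (0 < b)
  | s + 1, a, b => decide (a % 2 = 0) &&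
      if b % 2 = 0 then descends A B s (a / 2) (b / 2)
      else descends A B s (3 * (a / 2)) ((3 * b + 1) / 2)

lemma exists_le_of_descends {A B : ℕ} (r : ℕ) : ∀ {s a b : ℕ}, descends A B s a b = true →
    ∃ x, 0 < x ∧ 50 * x ≤ 47 * (A * r + B) ∧ (MemS x → MemS (a * r + b))
  | 0, a, b, h => by
    simp only [descends, Bool.and_eq_true, decide_eq_true_eq] at h
    obtain ⟨⟨ha, hb⟩, h0⟩ := h
    exact ⟨a * r + b, by omega, by nlinarith [Nat.mul_le_mul_right r ha], id⟩
  | s + 1, a, b, h => by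
    simp only [descends, Bool.and_eq_true, decide_eq_true_eq] at h
    obtain ⟨ha, h⟩ := h
    obtain ⟨a, rfl⟩ := Nat.dvd_of_mod_eq_zero ha
    rw [Nat.mul_div_cancel_left _ two_pos] at h
    split_ifs at h with hb
    · obtain ⟨x, hx0, hx, hS⟩ := exists_le_of_descends r h
      refine ⟨x, hx0, hx, fun hm => ?_⟩
      convert (hS hm).two_mul using 1
      rw [mul_add, Nat.mul_div_cancel' (Nat.dvd_of_mod_eq_zero hb), mul_assoc]
    · obtain ⟨x, hx0, hx, hS⟩ := exists_le_of_descends r h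
      refine ⟨x, hx0, hx, fun hm => (hS hm).of_step ?_⟩
      have : 2 * ((3 * b + 1) / 2) = 3 * b + 1 := by omega
      rw [mul_add, this]
      ring

/-- Entries `(k, c, q, s)`: for `n` in the class of `c` modulo `2 ^ k`, applying `s` steps of the
`3x+1` map to `q * n` gives a value below `n`. -/
def descentTable : List (ℕ × ℕ × ℕ × ℕ) :=
  [(1, 2, 1, 1), (2, 5, 1, 2), (4, 3, 1, 4), (5, 11, 1, 5), (10, 27, 35, 10),
    (11, 539, 5, 11), (11, 1563, 17, 11), (9, 283, 5, 9), (9, 155, 17, 9), (9, 411, 31, 9),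
    (8, 91, 25, 8), (9, 219, 47, 9), (9, 475, 1, 9), (7, 59, 1, 7), (8, 123, 7, 8),
    (8, 251, 23, 8), (6, 7, 5, 6), (7, 39, 35, 7), (9, 103, 5, 9), (9, 359, 35, 9),
    (8, 231, 5, 8), (5, 23, 1, 5), (7, 15, 1, 7), (9, 79, 1, 9), (10, 335, 11, 10),
    (10, 847, 1, 10), (9, 207, 5, 9), (9, 463, 43, 9), (7, 47, 13, 7), (7, 111, 11, 7),
    (6, 31, 11, 6), (7, 63, 11, 7), (8, 127, 43, 8)]

lemma descends_of_mem_descentTable : ∀ e ∈ descentTable,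
    descends (2 ^ e.1) e.2.1 e.2.2.2 (e.2.2.1 * 2 ^ e.1) (e.2.2.1 * e.2.1) = true := by
  decide +kernel

lemma memInv_of_mem_descentTable : ∀ e ∈ descentTable, e.2.2.1 ≠ 0 ∧ MemInv e.2.2.1 := by
  intro e he
  have h : ∀ e ∈ descentTable, e.2.2.1 ∈ [1, 5, 7, 11, 13, 17, 23, 25, 31, 35, 43, 47] := by
    decide +kernel
  have P {p : ℕ} (hp : p.Prime) (h3 : p ≠ 3) (hlt : p < 64) := memInv_of_prime_lt hp h3 hlt
  have h25 : MemInv 25 := memInv_five.mul memInv_five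
  have h35 : MemInv 35 := memInv_five.mul
    (P (p := 7) (by norm_num) (by norm_num) (by norm_num))
  have := h e he
  generalize e.2.2.1 = q at this
  simp only [List.mem_cons, List.not_mem_nil, or_false] at this
  rcases this with rfl | rfl | rfl | rfl | rfl | rfl | rfl | rfl | rfl | rfl | rfl | rfl <;>
    refine ⟨by norm_num, ?_⟩ <;>
    first
    | exact memInv_one
    | exact h25
    | exact h35
    | exact P (by norm_num) (by norm_num) (by norm_num)

lemma exists_mem_descentTable {n : ℕ} (h1 : 1 < n) (h : n % 256 ≠ 255) :
    ∃ e ∈ descentTable, e.2.1 ≤ n ∧ n % 2 ^ e.1 = e.2.1 % 2 ^ e.1 := by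
  have key : ∀ i < 64, ∀ j < 32, (32 * i + j) % 256 ≠ 255 → ∃ e ∈ descentTable,
      e.1 ≤ 11 ∧ (32 * i + j) % 2 ^ e.1 = e.2.1 % 2 ^ e.1 := by
    decide +kernel
  have small : ∀ e ∈ descentTable, e.2.1 < 2 ^ e.1 ∨ e.1 = 1 ∧ e.2.1 = 2 ∨ e.1 = 2 ∧ e.2.1 = 5 := by
    decide +kernel
  obtain ⟨e, he, hk, hm⟩ := key (n % 2048 / 32) (by omega) (n % 2048 % 32) (by omega)
    (by omega)
  rw [Nat.div_add_mod, Nat.mod_mod_of_dvd _ (show 2 ^ e.1 ∣ 2048 from pow_dvd_pow 2 hk)] at hm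
  refine ⟨e, he, ?_, hm⟩
  rcases small e he with h | ⟨hk, hc⟩ | ⟨hk, hc⟩
  · rw [Nat.mod_eq_of_lt h] at hm
    exact hm ▸ Nat.mod_le _ _
  · omega
  · rw [hk, hc] at hm
    omega

lemma exists_descent {n : ℕ} (h1 : 1 < n) (h : n % 256 ≠ 255) :
    ∃ x, 0 < x ∧ 50 * x ≤ 47 * n ∧ (MemS x → MemS n) := by
  obtain ⟨⟨k, c, q, s⟩, he, hle, hmod⟩ := exists_mem_descentTable h1 h
  obtain ⟨r, hr⟩ := (Nat.modEq_iff_dvd' hle).1 (show c ≡ n [MOD 2 ^ k] from hmod.symm)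
  obtain rfl : n = 2 ^ k * r + c := by dsimp only at hle hr; omega
  obtain ⟨x, hx0, hx, hS⟩ := exists_le_of_descends r (descends_of_mem_descentTable _ he)
  obtain ⟨hq0, hq⟩ := memInv_of_mem_descentTable _ he
  refine ⟨x, hx0, hx, fun hm => .of_mul hq0 hq ?_⟩
  convert hS hm using 1
  ring

lemma MemS.of_add {j q n m : ℕ} (hj : j ≠ 0) (hq : 3 * q = 2 ^ j + 1) (hI : MemInv q)
    (hn : n + 1 = 2 ^ j * m) (h : MemS (n + m)) : MemS n := by
  obtain ⟨i, rfl⟩ := Nat.exists_eq_succ_of_ne_zero hj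
  refine .of_mul (by rintro rfl; omega) hI (.of_step ?_ (h.two_pow_mul i))
  rw [pow_succ] at hq hn
  linear_combination -hn - n * hq

lemma exists_three_mul_eq {j : ℕ} (hj : j % 6 = 1 ∨ j % 6 = 5) :
    ∃ q, 3 * q = 2 ^ j + 1 ∧ ¬ 3 ∣ q := by
  have h : 2 ^ j % 9 = 2 ∨ 2 ^ j % 9 = 5 := by
    rw [← Nat.div_add_mod j 6, pow_add, pow_mul, Nat.mul_mod, Nat.pow_mod]
    rcases hj with hj | hj <;> simp [hj]
  exact ⟨(2 ^ j + 1) / 3, by omega, by omega⟩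

lemma exists_reduction {L : ℕ} (hL : 7 ≤ L)
    (hI : ∀ j q, j ≤ L → 3 * q = 2 ^ j + 1 → ¬ 3 ∣ q → MemInv q) {n a m : ℕ} (ha : 8 ≤ a)
    (hm : Odd m) (hn : n + 1 = 2 ^ a * m) :
    ∃ x a' m', Odd m' ∧ x + 1 = 2 ^ a' * m' ∧ (a' ≤ 3 ∨ a' + L ≤ a + 3) ∧
      n ≤ x ∧ 128 * (x + 1) ≤ 129 * (n + 1) ∧ (MemS x → MemS n) := by
  obtain ⟨j, hj6, hjL, hja, hj7, hj⟩ : ∃ j, (j % 6 = 1 ∨ j % 6 = 5) ∧ j ≤ L ∧ j ≤ a ∧ 7 ≤ j ∧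
      (a ≤ j + 3 ∨ L ≤ j + 3) := by
    obtain ⟨M, hM⟩ : ∃ M, M = min a L := ⟨_, rfl⟩
    have : M % 6 = 0 ∨ M % 6 = 1 ∨ M % 6 = 2 ∨ M % 6 = 3 ∨ M % 6 = 4 ∨ M % 6 = 5 := by omega
    rcases this with h | h | h | h | h | h
    · exact ⟨M - 1, by omega⟩
    · exact ⟨M, by omega⟩
    · exact ⟨M - 1, by omega⟩
    · exact ⟨M - 2, by omega⟩
    · exact ⟨M - 3, by omega⟩
    · exact ⟨M, by omega⟩
  obtain ⟨q, hq, hq3⟩ := exists_three_mul_eq hj6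
  have hn' : n + 1 = 2 ^ j * (2 ^ (a - j) * m) := by
    rw [hn, ← mul_assoc, ← pow_add, Nat.add_sub_cancel' hja]
  refine ⟨n + 2 ^ (a - j) * m, a - j, (2 ^ j + 1) * m, ?_, ?_, by omega, by omega, ?_,
    MemS.of_add (by omega) hq (hI j q hjL hq hq3) hn'⟩
  · refine Odd.mul (Even.add_one ?_) hm
    exact (Nat.even_pow.2 ⟨even_two, by omega⟩)
  · rw [add_right_comm, hn']
    ring
  · have h128 : 128 ≤ 2 ^ j := Nat.pow_le_pow_right two_pos hj7
    have := Nat.mul_le_mul_right (2 ^ (a - j) * m) h128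
    omega

lemma mod_ne_of_add_one_eq {x a m : ℕ} (hm : Odd m) (hx : x + 1 = 2 ^ a * m) (ha : a ≤ 7) :
    x % 256 ≠ 255 := by
  obtain ⟨k, rfl⟩ := hm
  interval_cases a <;> omega

lemma exists_lt_of_lt_two_pow {L : ℕ} (hL : 7 ≤ L)
    (hI : ∀ j q, j ≤ L → 3 * q = 2 ^ j + 1 → ¬ 3 ∣ q → MemInv q) {n : ℕ} (h1 : 1 < n)
    (hn : n + 1 < 2 ^ (2 * L + 2)) : ∃ x, 0 < x ∧ x < n ∧ (MemS x → MemS n) := by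
  obtain ⟨y, hy, hny, hyn, hS⟩ : ∃ y, y % 256 ≠ 255 ∧ n ≤ y ∧
      128 ^ 2 * (y + 1) ≤ 129 ^ 2 * (n + 1) ∧ (MemS y → MemS n) := by
    obtain ⟨a, m, hm, hnm⟩ := Nat.exists_eq_two_pow_mul_odd (n := n + 1) (by omega)
    have haL : a < 2 * L + 2 := by
      refine (Nat.pow_lt_pow_iff_right (a := 2) (by norm_num)).1 (lt_of_le_of_lt ?_ hn)
      rw [hnm]
      exact Nat.le_mul_of_pos_right _ hm.pos
    by_cases ha : a ≤ 7
    · exact ⟨n, mod_ne_of_add_one_eq hm hnm ha, le_rfl, by omega, id⟩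
    obtain ⟨x, a', m', hm', hx, ha', hnx, hxn, hS⟩ :=
      exists_reduction hL hI (by omega) hm hnm
    by_cases ha7 : a' ≤ 7
    · exact ⟨x, mod_ne_of_add_one_eq hm' hx ha7, hnx, by omega, hS⟩
    obtain ⟨z, a'', m'', hm'', hz, ha'', hxz, hzx, hS'⟩ :=
      exists_reduction hL hI (by omega) hm' hx
    exact ⟨z, mod_ne_of_add_one_eq hm'' hz (by omega), by omega, by omega, fun h => hS (hS' h)⟩
  obtain ⟨x, hx0, hx, hS'⟩ := exists_descent (by omega) hy
  exact ⟨x, hx0, by omega, fun h => hS (hS' h)⟩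

lemma memS_of_lt_two_pow {L : ℕ} (hL : 7 ≤ L)
    (hI : ∀ j q, j ≤ L → 3 * q = 2 ^ j + 1 → ¬ 3 ∣ q → MemInv q) {n : ℕ} (h0 : 0 < n)
    (hn : n + 1 < 2 ^ (2 * L + 2)) : MemS n := by
  induction n using Nat.strong_induction_on with
  | _ n ih =>
    rcases Nat.lt_or_ge 1 n with h1 | h1
    · obtain ⟨x, hx0, hxn, hS⟩ := exists_lt_of_lt_two_pow hL hI h1 hn
      exact hS (ih x hxn hx0 (by omega))
    · obtain rfl : n = 1 := by omega
      exact memS_one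

/-- One of `±1/6` and `±1/12` modulo `p` has a representative below `p` that is coprime to `6`. -/
lemma exists_inverse_coprime_six {p : ℕ} (h1 : 1 < p) (h2 : p % 2 = 1) (h3 : p % 3 ≠ 0) :
    ∃ w k : ℕ, w < p ∧ w % 2 = 1 ∧ w % 3 ≠ 0 ∧
      (6 * w = k * p + 1 ∨ 6 * w + 1 = k * p ∨ 12 * w = k * p + 1 ∨ 12 * w + 1 = k * p) := by
  obtain ⟨t, r, hr, hp⟩ : ∃ t r, r < 72 ∧ p = 72 * t + r :=
    ⟨p / 72, p % 72, Nat.mod_lt _ (by norm_num), by omega⟩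
  interval_cases r <;> first
    | omega
    | exact ⟨(p + 1) / 6, 1, by omega⟩
    | exact ⟨(p - 1) / 6, 1, by omega⟩
    | exact ⟨(5 * p + 1) / 6, 5, by omega⟩
    | exact ⟨(5 * p - 1) / 6, 5, by omega⟩
    | exact ⟨(p + 1) / 12, 1, by omega⟩
    | exact ⟨(p - 1) / 12, 1, by omega⟩
    | exact ⟨(5 * p + 1) / 12, 5, by omega⟩
    | exact ⟨(5 * p - 1) / 12, 5, by omega⟩
    | exact ⟨(7 * p + 1) / 12, 7, by omega⟩
    | exact ⟨(7 * p - 1) / 12, 7, by omega⟩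
    | exact ⟨(11 * p + 1) / 12, 11, by omega⟩

/-- A product of integers below `p` that are coprime to `6` represents `-1/3` modulo `2 * p`. -/
lemma exists_factors {p : ℕ} (hp : 48 < p) (h2 : p % 2 = 1) (h3 : p % 3 ≠ 0) :
    ∃ v w q : ℕ, 0 < v ∧ v < p ∧ ¬ 3 ∣ v ∧ 0 < w ∧ w < p ∧ ¬ 3 ∣ w ∧
      2 * (p * q) = 3 * (v * (w * w)) + 1 := by
  obtain ⟨w, k, hwp, hw2, hw3, hw⟩ := exists_inverse_coprime_six (by omega) h2 h3
  obtain ⟨c, hc, hdvd⟩ : ∃ c : ℕ, (c = 12 ∨ c = 48) ∧ (p : ℤ) ∣ 3 * c * w * w - 1 := by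
    rcases hw with hw | hw | hw | hw <;> zify at hw
    · exact ⟨12, by simp, k * (6 * w + 1), by push_cast; linear_combination (6 * w + 1 : ℤ) * hw⟩
    · exact ⟨12, by simp, k * (6 * w - 1), by push_cast; linear_combination (6 * w - 1 : ℤ) * hw⟩
    · exact ⟨48, by simp, k * (12 * w + 1), by push_cast; linear_combination (12 * w + 1 : ℤ) * hw⟩
    · exact ⟨48, by simp, k * (12 * w - 1), by push_cast; linear_combination (12 * w - 1 : ℤ) * hw⟩
  have hpdvd : p ∣ 3 * ((p - c) * (w * w)) + 1 := by
    zify [show c ≤ p by omega]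
    obtain ⟨d, hd⟩ := hdvd
    exact ⟨3 * w * w - d, by linear_combination -hd⟩
  have h2dvd : 2 ∣ 3 * ((p - c) * (w * w)) + 1 := by
    have ho : Odd ((p - c) * (w * w)) := by
      have hv : Odd (p - c) := Nat.odd_iff.2 (by omega)
      have hw : Odd w := Nat.odd_iff.2 hw2
      exact hv.mul (hw.mul hw)
    have := Nat.odd_iff.1 ho
    omega
  have hcop : Nat.Coprime 2 p := by
    rw [Nat.coprime_two_left]
    exact Nat.odd_iff.2 h2
  obtain ⟨q, hq⟩ := hcop.mul_dvd_of_dvd_of_dvd h2dvd hpdvd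
  exact ⟨p - c, w, q, by omega, by omega, by omega, by omega, hwp, by omega, by rw [hq, mul_assoc]⟩

lemma memInv_of_prime {p : ℕ} (hp : p.Prime) (h3 : p ≠ 3) : MemInv p := by
  induction p using Nat.strong_induction_on with
  | _ p ih =>
    rcases Nat.lt_or_ge p 64 with hlt | hge
    · exact memInv_of_prime_lt hp h3 hlt
    have lt_p {n : ℕ} (h0 : 0 < n) (hn : n < p) (hn3 : ¬ 3 ∣ n) : MemInv n :=
      .of_prime_factors h0.ne' fun r hr hd =>
        ih r ((Nat.le_of_dvd h0 hd).trans_lt hn) hr (by rintro rfl; exact hn3 hd)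
    obtain ⟨v, w, q, hv0, hv, hv3, hw0, hw, hw3, hq⟩ := exists_factors (p := p) (by omega)
      (hp.eq_two_or_odd.resolve_left (by omega))
      (fun h => h3 ((Nat.prime_dvd_prime_iff_eq Nat.prime_three hp).1
        (Nat.dvd_of_mod_eq_zero h)).symm)
    have hlog : 6 ≤ Nat.log 2 p := Nat.le_log_of_pow_le (by norm_num) (by omega)
    have hle : 2 ^ Nat.log 2 p ≤ p := Nat.pow_log_le_self 2 (by omega)
    have hlt : p < 2 ^ (Nat.log 2 p + 1) := Nat.lt_pow_succ_log_self (by norm_num) p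
    have hI : ∀ j q, j ≤ Nat.log 2 p + 1 → 3 * q = 2 ^ j + 1 → ¬ 3 ∣ q → MemInv q := by
      intro j q hj hq hq3
      have : 2 ^ j ≤ 2 ^ (Nat.log 2 p + 1) := Nat.pow_le_pow_right two_pos hj
      rw [pow_succ] at this
      exact lt_p (by omega) (by omega) hq3
    have hq0 : 0 < q := Nat.pos_of_ne_zero (by rintro rfl; omega)
    have hqp : q < 2 * (p * p) := by
      have h1 : v * (w * w) < p * (p * p) :=
        Nat.mul_lt_mul'' hv (Nat.mul_lt_mul'' hw hw)
      have h2 : p * q < p * (2 * (p * p)) := by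
        rw [Nat.mul_left_comm]
        omega
      exact Nat.lt_of_mul_lt_mul_left h2
    refine .of_step hq ((lt_p hv0 hv hv3).mul ((lt_p hw0 hw hw3).mul (lt_p hw0 hw hw3)))
      (memS_of_lt_two_pow (L := Nat.log 2 p + 1) (by omega) hI hq0 ?_)
    have h4 : p * p < 2 ^ (Nat.log 2 p + 1) * 2 ^ (Nat.log 2 p + 1) := Nat.mul_lt_mul'' hlt hlt
    have e : 2 ^ (2 * (Nat.log 2 p + 1) + 2) =
        4 * (2 ^ (Nat.log 2 p + 1) * 2 ^ (Nat.log 2 p + 1)) := by ring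
    omega

lemma memInv_of_not_three_dvd {n : ℕ} (h0 : n ≠ 0) (h : ¬ 3 ∣ n) : MemInv n :=
  .of_prime_factors h0 fun _ hr hd => memInv_of_prime hr (by rintro rfl; exact h hd)

lemma memS_of_pos {n : ℕ} (h0 : 0 < n) : MemS n := by
  refine memS_of_lt_two_pow (L := n + 7) (by omega)
    (fun j q _ hq hq3 => memInv_of_not_three_dvd (by rintro rfl; omega) hq3) h0 ?_
  calc n + 1 < 2 ^ (n + 1) := Nat.lt_two_pow_self
    _ ≤ 2 ^ (2 * (n + 7) + 2) := Nat.pow_le_pow_right two_pos (by omega)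

theorem collatz_semigroup_eq :
    (collatzSemigroup : Set ℚ) = {q : ℚ | 0 < q ∧ ¬ (3 ∣ q.den)} := by
  ext x
  change x ∈ collatzSemigroup ↔ 0 < x ∧ ¬ 3 ∣ x.den
  constructor
  · intro hx
    rw [collatzSemigroup] at hx
    induction hx using Subsemigroup.closure_induction with
    | mem x hx =>
      rcases hx with rfl | ⟨k, rfl⟩
      · norm_num
      · refine ⟨by positivity, fun h => ?_⟩
        have hd := Rat.den_dvd (2 * k + 1 : ℤ) (3 * k + 2 : ℤ)
        rw [Rat.divInt_eq_div] at hd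
        push_cast at hd
        have := (Int.natCast_dvd_natCast.2 h).trans hd
        omega
    | mul x y _ _ hx hy =>
      refine ⟨mul_pos hx.1 hy.1, fun h => ?_⟩
      rcases (Nat.prime_three.dvd_mul).1 (h.trans (Rat.mul_den_dvd x y)) with h | h
      · exact hx.2 h
      · exact hy.2 h
  · rintro ⟨h0, h3⟩
    have hnum : ((x.num.toNat : ℕ) : ℚ) = x.num := by
      exact_mod_cast Int.toNat_of_nonneg (Rat.num_pos.2 h0).le
    have h := mul_mem (memS_of_pos (n := x.num.toNat) (by have := Rat.num_pos.2 h0; omega))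
      (memInv_of_not_three_dvd x.den_nz h3)
    rwa [hnum, ← div_eq_mul_inv, Rat.num_div_den] at h
end

section
/- For all real x ≥ 256, π(6x) + π((6/5)x) - 2π(x) < x - 2, where π is the prime counting function. -/
open Nat

/-- The product of the primes up to `367`. -/
def smallPrimeProduct : ℕ :=
  12164225777291775545094262227518041831435735609411974226225152299039532954922737365042617099319896354948428967312205572919655268168725818308532229330

/-- The indicator function of the integers coprime to all primes up to `367`. -/
def roughIndicator (n : ℕ) : ℕ :=
  1 - (Nat.gcd n smallPrimeProduct - 1)

/-- The number of `n ∈ [6 * a, 6 * (a + len))` with `n ≡ 1, 5 [MOD 6]` that are coprime to all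
primes up to `367`. -/
def countRough (a : ℕ) : ℕ → ℕ
  | 0 => 0
  | len + 1 => countRough a len +
      (roughIndicator (6 * (a + len) + 1) + roughIndicator (6 * (a + len) + 5))

/-- `countRough a (64 * q)`, evaluated in blocks of length `64` to keep the recursion shallow. -/
def countRoughBlocks (a : ℕ) : ℕ → ℕ
  | 0 => 0
  | q + 1 => countRoughBlocks a q + countRough (a + 64 * q) 64

lemma dvd_of_prime_of_lt_20 {p : ℕ} (hp : p.Prime) (h : p < 20) : p ∣ 9699690 := by
  interval_cases p <;> revert hp <;> norm_num

/-- Primality below `400`, tested against the product `9699690` of the primes below `20`. -/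
lemma prime_iff_of_lt_400 {n : ℕ} (hn : n < 400) :
    n.Prime ↔ n ∈ [2, 3, 5, 7, 11, 13, 17, 19] ∨ 1 < n ∧ n.gcd 9699690 = 1 := by
  constructor
  · intro hp
    rcases lt_or_ge n 20 with h | h
    · left
      interval_cases n <;> revert hp <;> norm_num
    · refine .inr ⟨hp.one_lt, Nat.Coprime.coprime_dvd_right (by decide +kernel)
        ((coprime_factorial_iff hp.ne_one (n := 19)).2 (by rw [hp.minFac_eq]; lia))⟩
  · rintro (h | ⟨h1, h⟩)
    · simp only [List.mem_cons, List.not_mem_nil, or_false] at h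
      rcases h with rfl | rfl | rfl | rfl | rfl | rfl | rfl | rfl <;> norm_num
    · by_contra hn'
      have hsq := Nat.minFac_sq_le_self (by lia) hn'
      have hmin := Nat.minFac_prime (n := n) (by lia)
      have hdvd := Nat.dvd_gcd n.minFac_dvd (dvd_of_prime_of_lt_20 hmin (by nlinarith))
      rw [h, Nat.dvd_one] at hdvd
      exact hmin.ne_one hdvd

lemma primeCounting'_eq_count_of_le {n : ℕ} (hn : n ≤ 400) :
    primeCounting' n =
      Nat.count (fun k ↦ k ∈ [2, 3, 5, 7, 11, 13, 17, 19] ∨ 1 < k ∧ k.gcd 9699690 = 1) n := by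
  rw [primeCounting', Nat.count_eq_card_filter_range, Nat.count_eq_card_filter_range]
  congr 1
  exact Finset.filter_congr fun k hk ↦
    prime_iff_of_lt_400 ((Finset.mem_range.1 hk).trans_le hn)

lemma dvd_smallPrimeProduct {p : ℕ} (hp : p.Prime) (h : p < 368) : p ∣ smallPrimeProduct := by
  have hdvd : ∀ p < 368, (p ∈ [2, 3, 5, 7, 11, 13, 17, 19] ∨ 1 < p ∧ p.gcd 9699690 = 1) →
      p ∣ smallPrimeProduct := by decide +kernel
  exact hdvd p h ((prime_iff_of_lt_400 (by lia)).1 hp)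

lemma roughIndicator_eq {n : ℕ} (h : 367 < n) (h' : n < 135424) :
    roughIndicator n = if n.Prime then 1 else 0 := by
  have hfac : smallPrimeProduct ∣ 367 ! := by decide +kernel
  unfold roughIndicator
  split_ifs with hn
  · have hc : n.Coprime smallPrimeProduct :=
      Nat.Coprime.coprime_dvd_right hfac ((coprime_factorial_iff hn.ne_one).2 (by
        rwa [hn.minFac_eq]))
    rw [hc.gcd_eq_one]
  · have hlt : n.minFac < 368 := by
      have := Nat.minFac_sq_le_self (by lia) hn
      nlinarith
    have hp := Nat.minFac_prime (n := n) (by lia)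
    have hg : n.minFac ∣ n.gcd smallPrimeProduct :=
      Nat.dvd_gcd n.minFac_dvd (dvd_smallPrimeProduct hp hlt)
    have := Nat.le_of_dvd (Nat.gcd_pos_of_pos_left _ (by lia)) hg
    have := hp.two_le
    lia

lemma primeCounting'_six_mul_succ {a : ℕ} (h : 367 < 6 * a) (h' : 6 * (a + 1) ≤ 135424) :
    primeCounting' (6 * (a + 1)) =
      primeCounting' (6 * a) + (roughIndicator (6 * a + 1) + roughIndicator (6 * a + 5)) := by
  have not_prime {d m : ℕ} (hd : 1 < d) (hm : d < m) (hdm : d ∣ m) : ¬ m.Prime := fun hp ↦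
    ((Nat.dvd_prime hp).1 hdm).elim (by lia) (by lia)
  have h0 : ¬ (6 * a).Prime := not_prime (d := 2) (by lia) (by lia) (by lia)
  have h2 : ¬ (6 * a + 2).Prime := not_prime (d := 2) (by lia) (by lia) (by lia)
  have h3 : ¬ (6 * a + 3).Prime := not_prime (d := 3) (by lia) (by lia) (by lia)
  have h4 : ¬ (6 * a + 4).Prime := not_prime (d := 2) (by lia) (by lia) (by lia)
  rw [roughIndicator_eq (by lia) (by lia), roughIndicator_eq (by lia) (by lia)]
  simp only [primeCounting', mul_add, mul_one, Nat.count_succ]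
  simp [h0, h2, h3, h4, add_assoc]

lemma primeCounting'_add_countRough {a len : ℕ} (h : 367 < 6 * a)
    (h' : 6 * (a + len) ≤ 135424) :
    primeCounting' (6 * (a + len)) = primeCounting' (6 * a) + countRough a len := by
  induction len with
  | zero => simp [countRough]
  | succ len ih =>
    rw [← add_assoc, primeCounting'_six_mul_succ (by lia) (by lia), ih (by lia), countRough,
      add_assoc]

lemma primeCounting'_add_countRoughBlocks {a q : ℕ} (h : 367 < 6 * a)
    (h' : 6 * (a + 64 * q) ≤ 135424) :
    primeCounting' (6 * (a + 64 * q)) = primeCounting' (6 * a) + countRoughBlocks a q := by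
  induction q with
  | zero => simp [countRoughBlocks]
  | succ q ih =>
    rw [mul_add_one, ← add_assoc, primeCounting'_add_countRough (by lia) (by lia), ih (by lia),
      countRoughBlocks, add_assoc]

lemma primeCounting'_eq_of_countRough (a q r : ℕ) {m n u v : ℕ} (hm : primeCounting' m = u)
    (h : 367 < m ∧ m = 6 * a ∧ n = 6 * (a + 64 * q + r) ∧ n ≤ 135424 ∧
      u + countRoughBlocks a q + countRough (a + 64 * q) r = v) :
    primeCounting' n = v := by
  obtain ⟨h1, rfl, rfl, h2, rfl⟩ := h
  rw [primeCounting'_add_countRough (by lia) h2,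
    primeCounting'_add_countRoughBlocks h1 (by lia), hm]

lemma primeCounting_floor_le {y : ℝ} {n u : ℕ} (hy : 0 ≤ y) (h : y < n)
    (hn : primeCounting' n = u) : (primeCounting ⌊y⌋₊ : ℝ) ≤ u := by
  rw [← hn, primeCounting_eq_primeCounting'_succ]
  exact_mod_cast monotone_primeCounting' ((Nat.floor_lt hy).2 h)

lemma le_primeCounting_floor {y : ℝ} {n u : ℕ} (h : (n : ℝ) ≤ y)
    (hn : primeCounting' n = u) : (u : ℝ) ≤ primeCounting ⌊y⌋₊ := by
  rw [← hn, primeCounting_eq_primeCounting'_succ]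
  exact_mod_cast monotone_primeCounting' ((Nat.le_floor h).trans (Nat.le_succ _))

lemma combination_lt_of_mem_Ico (c : ℝ) {x : ℝ} {a b d e u v w : ℕ} (ha : (a : ℝ) ≤ x)
    (hc : c ≤ x) (hb : x < b) (hu : primeCounting' a = u) (hv : primeCounting' d = v)
    (hw : primeCounting' e = w)
    (h : 6 * b = d ∧ 6 * b = 5 * e ∧ (v + w - 2 * u : ℝ) < c - 2) :
    (primeCounting ⌊6 * x⌋₊ : ℝ) + (primeCounting ⌊(6 / 5) * x⌋₊ : ℝ)
      - 2 * (primeCounting ⌊x⌋₊ : ℝ) < x - 2 := by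
  obtain ⟨hd, he, h⟩ := h
  have hd' : (6 * b : ℝ) = d := mod_cast hd
  have he' : (6 * b : ℝ) = 5 * e := mod_cast he
  have hx : 0 ≤ x := (Nat.cast_nonneg a).trans ha
  have h1 := le_primeCounting_floor ha hu
  have h2 := primeCounting_floor_le (y := 6 * x) (by positivity) (by linarith) hv
  have h3 := primeCounting_floor_le (y := (6 / 5) * x) (by positivity) (by linarith) hw
  linarith

lemma combination_lt_of_lt {x : ℝ} (hx : 256 ≤ x) (hx' : x < 22050) :
    (primeCounting ⌊6 * x⌋₊ : ℝ) + (primeCounting ⌊(6 / 5) * x⌋₊ : ℝ)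
      - 2 * (primeCounting ⌊x⌋₊ : ℝ) < x - 2 := by
  have h252 : primeCounting' 252 = 54 :=
    (primeCounting'_eq_count_of_le (by norm_num)).trans (by decide +kernel)
  have h300 : primeCounting' 300 = 62 :=
    (primeCounting'_eq_count_of_le (by norm_num)).trans (by decide +kernel)
  have h360 : primeCounting' 360 = 72 :=
    (primeCounting'_eq_count_of_le (by norm_num)).trans (by decide +kernel)
  have h372 : primeCounting' 372 = 73 :=
    (primeCounting'_eq_count_of_le (by norm_num)).trans (by decide +kernel)
  have h432 : primeCounting' 432 = 83 :=
    primeCounting'_eq_of_countRough 62 0 10 h372 (by decide +kernel)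
  have h450 : primeCounting' 450 = 87 :=
    primeCounting'_eq_of_countRough 72 0 3 h432 (by decide +kernel)
  have h540 : primeCounting' 540 = 99 :=
    primeCounting'_eq_of_countRough 75 0 15 h450 (by decide +kernel)
  have h570 : primeCounting' 570 = 104 :=
    primeCounting'_eq_of_countRough 90 0 5 h540 (by decide +kernel)
  have h684 : primeCounting' 684 = 124 :=
    primeCounting'_eq_of_countRough 95 0 19 h570 (by decide +kernel)
  have h750 : primeCounting' 750 = 132 :=
    primeCounting'_eq_of_countRough 114 0 11 h684 (by decide +kernel)
  have h900 : primeCounting' 900 = 154 :=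
    primeCounting'_eq_of_countRough 125 0 25 h750 (by decide +kernel)
  have h1020 : primeCounting' 1020 = 171 :=
    primeCounting'_eq_of_countRough 150 0 20 h900 (by decide +kernel)
  have h1224 : primeCounting' 1224 = 200 :=
    primeCounting'_eq_of_countRough 170 0 34 h1020 (by decide +kernel)
  have h1440 : primeCounting' 1440 = 228 :=
    primeCounting'_eq_of_countRough 204 0 36 h1224 (by decide +kernel)
  have h1728 : primeCounting' 1728 = 269 :=
    primeCounting'_eq_of_countRough 240 0 48 h1440 (by decide +kernel)
  have h1800 : primeCounting' 1800 = 278 :=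
    primeCounting'_eq_of_countRough 288 0 12 h1728 (by decide +kernel)
  have h2100 : primeCounting' 2100 = 317 :=
    primeCounting'_eq_of_countRough 300 0 50 h1800 (by decide +kernel)
  have h2160 : primeCounting' 2160 = 325 :=
    primeCounting'_eq_of_countRough 350 0 10 h2100 (by decide +kernel)
  have h2520 : primeCounting' 2520 = 368 :=
    primeCounting'_eq_of_countRough 360 0 60 h2160 (by decide +kernel)
  have h2700 : primeCounting' 2700 = 393 :=
    primeCounting'_eq_of_countRough 420 0 30 h2520 (by decide +kernel)
  have h3210 : primeCounting' 3210 = 454 :=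
    primeCounting'_eq_of_countRough 450 1 21 h2700 (by decide +kernel)
  have h3420 : primeCounting' 3420 = 480 :=
    primeCounting'_eq_of_countRough 535 0 35 h3210 (by decide +kernel)
  have h3852 : primeCounting' 3852 = 534 :=
    primeCounting'_eq_of_countRough 570 1 8 h3420 (by decide +kernel)
  have h4500 : primeCounting' 4500 = 610 :=
    primeCounting'_eq_of_countRough 642 1 44 h3852 (by decide +kernel)
  have h5100 : primeCounting' 5100 = 681 :=
    primeCounting'_eq_of_countRough 750 1 36 h4500 (by decide +kernel)
  have h6120 : primeCounting' 6120 = 797 :=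
    primeCounting'_eq_of_countRough 850 2 42 h5100 (by decide +kernel)
  have h8460 : primeCounting' 8460 = 1057 :=
    primeCounting'_eq_of_countRough 1020 6 6 h6120 (by decide +kernel)
  have h8640 : primeCounting' 8640 = 1075 :=
    primeCounting'_eq_of_countRough 1410 0 30 h8460 (by decide +kernel)
  have h10152 : primeCounting' 10152 = 1246 :=
    primeCounting'_eq_of_countRough 1440 3 60 h8640 (by decide +kernel)
  have h12600 : primeCounting' 12600 = 1504 :=
    primeCounting'_eq_of_countRough 1692 6 24 h10152 (by decide +kernel)
  have h14670 : primeCounting' 14670 = 1718 :=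
    primeCounting'_eq_of_countRough 2100 5 25 h12600 (by decide +kernel)
  have h17604 : primeCounting' 17604 = 2024 :=
    primeCounting'_eq_of_countRough 2445 7 41 h14670 (by decide +kernel)
  have h19260 : primeCounting' 19260 = 2184 :=
    primeCounting'_eq_of_countRough 2934 4 20 h17604 (by decide +kernel)
  have h26460 : primeCounting' 26460 = 2907 :=
    primeCounting'_eq_of_countRough 3210 18 48 h19260 (by decide +kernel)
  have h30600 : primeCounting' 30600 = 3302 :=
    primeCounting'_eq_of_countRough 4410 10 50 h26460 (by decide +kernel)
  have h50760 : primeCounting' 50760 = 5200 :=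
    primeCounting'_eq_of_countRough 5100 52 32 h30600 (by decide +kernel)
  have h88020 : primeCounting' 88020 = 8547 :=
    primeCounting'_eq_of_countRough 8460 97 2 h50760 (by decide +kernel)
  have h132300 : primeCounting' 132300 = 12351 :=
    primeCounting'_eq_of_countRough 14670 115 20 h88020 (by decide +kernel)
  rcases lt_or_ge x 300 with hb | hx
  · exact combination_lt_of_mem_Ico 256 (by norm_num; linarith) hx hb h252 h1800 h360
      (by norm_num)
  rcases lt_or_ge x 360 with hb | hx
  · exact combination_lt_of_mem_Ico 300 (by norm_num; linarith) hx hb h300 h2160 h432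
      (by norm_num)
  rcases lt_or_ge x 450 with hb | hx
  · exact combination_lt_of_mem_Ico 360 (by norm_num; linarith) hx hb h360 h2700 h540
      (by norm_num)
  rcases lt_or_ge x 570 with hb | hx
  · exact combination_lt_of_mem_Ico 450 (by norm_num; linarith) hx hb h450 h3420 h684
      (by norm_num)
  rcases lt_or_ge x 750 with hb | hx
  · exact combination_lt_of_mem_Ico 570 (by norm_num; linarith) hx hb h570 h4500 h900
      (by norm_num)
  rcases lt_or_ge x 1020 with hb | hx
  · exact combination_lt_of_mem_Ico 750 (by norm_num; linarith) hx hb h750 h6120 h1224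
      (by norm_num)
  rcases lt_or_ge x 1440 with hb | hx
  · exact combination_lt_of_mem_Ico 1020 (by norm_num; linarith) hx hb h1020 h8640 h1728
      (by norm_num)
  rcases lt_or_ge x 2100 with hb | hx
  · exact combination_lt_of_mem_Ico 1440 (by norm_num; linarith) hx hb h1440 h12600 h2520
      (by norm_num)
  rcases lt_or_ge x 3210 with hb | hx
  · exact combination_lt_of_mem_Ico 2100 (by norm_num; linarith) hx hb h2100 h19260 h3852
      (by norm_num)
  rcases lt_or_ge x 5100 with hb | hx
  · exact combination_lt_of_mem_Ico 3210 (by norm_num; linarith) hx hb h3210 h30600 h6120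
      (by norm_num)
  rcases lt_or_ge x 8460 with hb | hx
  · exact combination_lt_of_mem_Ico 5100 (by norm_num; linarith) hx hb h5100 h50760 h10152
      (by norm_num)
  rcases lt_or_ge x 14670 with hb | hx
  · exact combination_lt_of_mem_Ico 8460 (by norm_num; linarith) hx hb h8460 h88020 h17604
      (by norm_num)
  exact combination_lt_of_mem_Ico 14670 (by norm_num; linarith) hx hx' h14670 h132300 h26460
      (by norm_num)

/-- Each prime in `(x, y]` contributes at least `log x` to `θ y`. -/
lemma primeCounting_sub_mul_log_le_theta {x y : ℝ} (hx : 1 ≤ x) (hxy : x ≤ y) :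
    ((primeCounting ⌊y⌋₊ : ℝ) - primeCounting ⌊x⌋₊) * Real.log x ≤ Chebyshev.theta y := by
  have hsub : primesLE ⌊x⌋₊ ⊆ primesLE ⌊y⌋₊ := fun p hp ↦ by
    rw [mem_primesLE] at hp ⊢
    exact ⟨hp.1.trans (Nat.floor_mono hxy), hp.2⟩
  rw [Chebyshev.theta_eq_sum_primesLE, ← primesLE_card_eq_primeCounting,
    ← primesLE_card_eq_primeCounting, ← Nat.cast_sub (Finset.card_le_card hsub),
    ← Finset.card_sdiff_of_subset hsub, ← nsmul_eq_mul, ← Finset.sum_const]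
  calc ∑ _p ∈ primesLE ⌊y⌋₊ \ primesLE ⌊x⌋₊, Real.log x
      ≤ ∑ p ∈ primesLE ⌊y⌋₊ \ primesLE ⌊x⌋₊, Real.log p := by
        refine Finset.sum_le_sum fun p hp ↦ Real.log_le_log (by linarith) ?_
        rw [Finset.mem_sdiff, mem_primesLE, mem_primesLE] at hp
        exact (Nat.lt_of_floor_lt (not_le.1 fun h ↦ hp.2 ⟨h, hp.1.2⟩)).le
    _ ≤ ∑ p ∈ primesLE ⌊y⌋₊, Real.log p :=
        Finset.sum_le_sum_of_subset_of_nonneg Finset.sdiff_subset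
          fun p _ _ ↦ Real.log_natCast_nonneg p

lemma combination_lt_of_le {x : ℝ} (hx : 22050 ≤ x) :
    (primeCounting ⌊6 * x⌋₊ : ℝ) + (primeCounting ⌊(6 / 5) * x⌋₊ : ℝ)
      - 2 * (primeCounting ⌊x⌋₊ : ℝ) < x - 2 := by
  have hlog : 10 ≤ Real.log x := by
    rw [Real.le_log_iff_exp_le (by linarith)]
    calc Real.exp 10 = Real.exp 1 ^ 10 := by rw [← Real.exp_nat_mul]; norm_num
      _ ≤ 2.7182818286 ^ 10 := by gcongr; exact Real.exp_one_lt_d9.le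
      _ ≤ x := by norm_num; linarith
  have h4 : Real.log 4 ≤ 1.3862943616 := by
    rw [show (4 : ℝ) = 2 ^ 2 by norm_num, Real.log_pow]
    have := Real.log_two_lt_d9
    norm_num
    linarith
  have h1 := primeCounting_sub_mul_log_le_theta (x := x) (y := 6 * x) (by linarith) (by linarith)
  have h2 := primeCounting_sub_mul_log_le_theta (x := x) (y := (6 / 5) * x)
    (by linarith) (by linarith)
  have h3 := Chebyshev.theta_le_log4_mul_x (x := 6 * x) (by linarith)
  have h5 := Chebyshev.theta_le_log4_mul_x (x := (6 / 5) * x) (by linarith)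
  have h6 : Real.log 4 * x ≤ 1.3862943616 * x := by gcongr
  by_contra! h
  nlinarith [mul_le_mul h hlog (by norm_num) (by linarith)]

theorem primeCounting_combination_bound (x : ℝ) (hx : 256 ≤ x) :
    (Nat.primeCounting ⌊6 * x⌋₊ : ℝ) + (Nat.primeCounting ⌊(6 / 5) * x⌋₊ : ℝ)
      - 2 * (Nat.primeCounting ⌊x⌋₊ : ℝ) < x - 2 :=
  (lt_or_ge x 22050).elim (combination_lt_of_lt hx) combination_lt_of_le
end
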